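/- Let ω: S² → S⁴ be a linearly full, smooth, S¹-equivariant harmonic sphere. Then there exist μ₁, μ₂ ∈ ℂ∖{0} and a sign ε ∈ {+1,−1} such that ε·ω = ω_{μ₁,μ₂}, where ω_{μ₁,μ₂} is the explicit map given in homogeneous coordinates by ω_{μ₁,μ₂}([z₀,z₁]) = D⁻¹·( |z₀|⁶ − |μ₁|²|z₀|⁴|z₁|² − |μ₂|²|z₀|²|z₁|⁴ + (|μ₁|²|μ₂|²/9)|z₁|⁶ , 2μ₁ z̄₀z₁(|z₀|⁴ − (|μ₂|²/3)|z₁|⁴) , 2μ₂ z̄₀²z₁²(|z₀|² + (|μ₁|²/3)|z₁|²) ), with D = |z₀|⁶ + |μ₁|²|z₀|⁴|z₁|² + |μ₂|²|z₀|²|z₁|⁴ + (|μ₁|²|μ₂|²/9)|z₁|⁶. In other words, up to composition with the antipodal map of S⁴, every linearly full S¹-equivariant harmonic sphere into S⁴ belongs to this two-complex-parameter family. -/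

import Mathlib

noncomputable section

open MeasureTheory
open scoped Classical

abbrev E3 : Type := EuclideanSpace ℝ (Fin 3)

abbrev V5 : Type := ℝ × ℂ × ℂ

/-- Squared Euclidean norm on ℝ ⊕ ℂ ⊕ ℂ. -/
def nsq (p : V5) : ℝ := p.1 ^ 2 + Complex.normSq p.2.1 + Complex.normSq p.2.2

/-- Real inner product on ℝ ⊕ ℂ ⊕ ℂ. -/
def vdot (p q : V5) : ℝ :=
  p.1 * q.1 + (p.2.1 * (starRingEnd ℂ) q.2.1).re + (p.2.2 * (starRingEnd ℂ) q.2.2).re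

/-- The circle action R_α · (t, ζ₁, ζ₂) = (t, e^{iα}ζ₁, e^{2iα}ζ₂) on ℝ ⊕ ℂ ⊕ ℂ. -/
def circAct (α : ℝ) (p : V5) : V5 :=
  (p.1, Complex.exp (Complex.I * (α : ℂ)) * p.2.1,
    Complex.exp (2 * Complex.I * (α : ℂ)) * p.2.2)

/-- Rotation of ℝ³ by angle α about the x₃-axis. -/
def rot3 (α : ℝ) (x : E3) : E3 :=
  EuclideanSpace.single (0 : Fin 3) (Real.cos α * x 0 - Real.sin α * x 1) +
    EuclideanSpace.single (1 : Fin 3) (Real.sin α * x 0 + Real.cos α * x 1) +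
    EuclideanSpace.single (2 : Fin 3) (x 2)

/-- The unit sphere S² ⊂ ℝ³. -/
def sphere2 : Set E3 := Metric.sphere (0 : E3) 1

def northPole : E3 := EuclideanSpace.single (2 : Fin 3) (1 : ℝ)

def southPole : E3 := EuclideanSpace.single (2 : Fin 3) (-1 : ℝ)

/-- Degree-zero homogeneous extension of a map defined on the sphere. -/
def homExt (ω : E3 → V5) : E3 → V5 := fun x => ω (‖x‖⁻¹ • x)

def homExtR (g : E3 → ℝ) : E3 → ℝ := fun x => g (‖x‖⁻¹ • x)

/-- Squared Euclidean norm of the differential. -/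
def gradSq (f : E3 → V5) (x : E3) : ℝ :=
  ∑ i : Fin 3, nsq (fderiv ℝ f x (EuclideanSpace.single i (1 : ℝ)))

def gradSqR (f : E3 → ℝ) (x : E3) : ℝ :=
  ∑ i : Fin 3, fderiv ℝ f x (EuclideanSpace.single i (1 : ℝ)) ^ 2

/-- Componentwise Euclidean Laplacian. -/
def lap (f : E3 → V5) (x : E3) : V5 :=
  ∑ i : Fin 3,
    fderiv ℝ (fun y => fderiv ℝ f y (EuclideanSpace.single i (1 : ℝ))) x
      (EuclideanSpace.single i (1 : ℝ))

/-- ω : S² → S⁴ is a (smooth) harmonic sphere: it maps the sphere into the unit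
sphere of ℝ ⊕ ℂ ⊕ ℂ, its degree-zero homogeneous extension Q is smooth away from
the origin, and ΔQ + |∇Q|²Q = 0 on ℝ³ ∖ {0}. -/
def IsHarmonicSphere (ω : E3 → V5) : Prop :=
  (∀ x ∈ sphere2, nsq (ω x) = 1) ∧
    ContDiffOn ℝ (⊤ : ℕ∞) (homExt ω) {(0 : E3)}ᶜ ∧
    ∀ x : E3, x ≠ 0 → lap (homExt ω) x + gradSq (homExt ω) x • homExt ω x = 0

/-- S¹-equivariance of a sphere map. -/
def EquivariantS (ω : E3 → V5) : Prop :=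
  ∀ α : ℝ, ∀ x ∈ sphere2, ω (rot3 α x) = circAct α (ω x)

/-- S¹-equivariance of a vector field on ℝ³. -/
def EquivariantV (X : E3 → V5) : Prop :=
  ∀ (α : ℝ) (x : E3), X (rot3 α x) = circAct α (X x)

/-- Tangential part X_T = X - (w·X)w. -/
def tangPart (w X : E3 → V5) : E3 → V5 := fun x => X x - vdot (w x) (X x) • w x

/-- Second variation δ²E₀(w)[X] = ∫ (|∇X_T|² - |∇w|²|X_T|²). -/
def secondVar (w X : E3 → V5) : ℝ :=
  ∫ x : E3, (gradSq (tangPart w X) x - gradSq w x * nsq (tangPart w X x))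

/-- Stability of a tangent map within the S¹-equivariant class. -/
def IsStable (w : E3 → V5) : Prop :=
  ∀ X : E3 → V5, ContDiff ℝ (⊤ : ℕ∞) X → HasCompactSupport X → EquivariantV X →
    0 ≤ secondVar w X

def conj' (z : ℂ) : ℂ := (starRingEnd ℂ) z

/-- The twistor fibration, in homogeneous coordinates on ℂ⁴ ∖ {0}. -/
def tau4 (w0 w1 w2 w3 : ℂ) : V5 :=
  ((Complex.normSq w0 + Complex.normSq w3 - Complex.normSq w1 - Complex.normSq w2) /
      (Complex.normSq w0 + Complex.normSq w1 + Complex.normSq w2 + Complex.normSq w3),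
    2 * (conj' w0 * w1 + conj' w2 * w3) /
      ((Complex.normSq w0 + Complex.normSq w1 + Complex.normSq w2 + Complex.normSq w3 : ℝ) : ℂ),
    2 * (conj' w0 * w2 - conj' w1 * w3) /
      ((Complex.normSq w0 + Complex.normSq w1 + Complex.normSq w2 + Complex.normSq w3 : ℝ) : ℂ))

/-- Inverse stereographic projection ℂ → S² (from the south pole). -/
def stInv (z : ℂ) : E3 :=
  EuclideanSpace.single (0 : Fin 3) (2 * z.re / (1 + Complex.normSq z)) +
    EuclideanSpace.single (1 : Fin 3) (2 * z.im / (1 + Complex.normSq z)) +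
    EuclideanSpace.single (2 : Fin 3) ((1 - Complex.normSq z) / (1 + Complex.normSq z))

/-- Equatorial embedding ω_eq^{(1)}(x) = (x₃, x₁ + ix₂, 0). -/
def omegaEq1 (x : E3) : V5 := (x 2, (x 0 : ℂ) + (x 1 : ℂ) * Complex.I, 0)

/-- Equatorial embedding ω_eq^{(2)}(x) = (x₃, 0, x₁ + ix₂). -/
def omegaEq2 (x : E3) : V5 := (x 2, 0, (x 0 : ℂ) + (x 1 : ℂ) * Complex.I)

/-- The horizontal algebraic curve composed with the twistor fibration. -/
def liftCurve (μ1 μ2 z0 z1 : ℂ) : V5 :=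
  tau4 (z0 ^ 3) (μ1 * z0 ^ 2 * z1) (μ2 * z0 * z1 ^ 2) (-(μ1 * μ2 / 3) * z1 ^ 3)

/-- The explicit two-parameter family ω_{μ₁,μ₂} of equivariant harmonic spheres,
as a map defined on S² via the identification [z₀, z₁] ↦ σ₂⁻¹(z₁/z₀). -/
def omegaFam (μ1 μ2 : ℂ) (x : E3) : V5 :=
  if x = southPole then
    if μ1 = 0 ∧ μ2 = 0 then ((1 : ℝ), 0, 0)
    else if μ1 ≠ 0 ∧ μ2 ≠ 0 then liftCurve μ1 μ2 0 1
    else ((-1 : ℝ), 0, 0)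
  else liftCurve μ1 μ2 ((1 + x 2 : ℝ) : ℂ) ((x 0 : ℂ) + (x 1 : ℂ) * Complex.I)

/-- Wirtinger derivative ∂f/∂z̄ = ½(∂_{x₁} + i ∂_{x₂})f. -/
def wd (f : ℂ → ℂ) (z : ℂ) : ℂ :=
  (1 / 2 : ℂ) * (fderiv ℝ f z 1 + Complex.I * fderiv ℝ f z Complex.I)

/-- Surface (2-dimensional Hausdorff) measure on ℝ³. -/
def surf : Measure E3 := Measure.hausdorffMeasure 2

lemma gron0 {f f' : ℝ → ℝ} {K : ℝ} (hf : ∀ u, HasDerivAt f (f' u) u)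
    (hK : ∀ u, |f' u| ≤ K * |f u|) {u0 : ℝ} (h0 : f u0 = 0) : ∀ u, f u = 0 := by
  have key : ∀ u, |f u * f' u| ≤ K * f u ^ 2 := by
    intro u
    rw [abs_mul, ← sq_abs (f u)]
    nlinarith [hK u, abs_nonneg (f u)]
  have hE : ∀ c u : ℝ, HasDerivAt (fun u => Real.exp (c * u)) (Real.exp (c * u) * c) u := by
    intro c u
    simpa using ((hasDerivAt_id u).const_mul c).exp
  have h1 : Antitone (fun u => f u ^ 2 * Real.exp ((-2 * K) * u)) := by
    apply antitone_of_hasDerivAt_nonpos (f' := fun u => (2 * f u * f' u) * Real.exp ((-2 * K) * u) +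
      f u ^ 2 * (Real.exp ((-2 * K) * u) * (-2 * K)))
    · intro u
      have := ((hf u).pow 2).mul (hE (-2 * K) u)
      refine this.congr_deriv ?_
      simp
    · intro u
      have hp := Real.exp_pos ((-2 * K) * u)
      have := (abs_le.1 (key u)).2
      simp only [Pi.zero_apply]
      nlinarith
  have h2 : Monotone (fun u => f u ^ 2 * Real.exp ((2 * K) * u)) := by
    apply monotone_of_hasDerivAt_nonneg (f' := fun u => (2 * f u * f' u) * Real.exp ((2 * K) * u) +
      f u ^ 2 * (Real.exp ((2 * K) * u) * (2 * K)))
    · intro u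
      have := ((hf u).pow 2).mul (hE (2 * K) u)
      refine this.congr_deriv ?_
      simp
    · intro u
      have hp := Real.exp_pos ((2 * K) * u)
      have := (abs_le.1 (key u)).1
      simp only [Pi.zero_apply]
      nlinarith
  intro u
  rcases le_total u0 u with h | h
  · have := h1 h
    simp only [h0] at this
    have hp := Real.exp_pos ((-2 * K) * u)
    have h3 : f u ^ 2 ≤ 0 := by
      by_contra hh
      push Not at hh
      nlinarith [mul_pos hh hp]
    nlinarith [sq_nonneg (f u), pow_eq_zero_iff (two_ne_zero) |>.1 (le_antisymm h3 (sq_nonneg (f u)))]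
  · have := h2 h
    simp only [h0] at this
    have hp := Real.exp_pos ((2 * K) * u)
    have h3 : f u ^ 2 ≤ 0 := by
      by_contra hh
      push Not at hh
      nlinarith [mul_pos hh hp]
    exact pow_eq_zero_iff (two_ne_zero) |>.1 (le_antisymm h3 (sq_nonneg (f u)))

lemma const0 {f f' : ℝ → ℝ} (hf : ∀ u, HasDerivAt f (f' u) u) (h : ∀ u, f' u = 0) (u v : ℝ) :
    f u = f v :=
  is_const_of_deriv_eq_zero (fun u => (hf u).differentiableAt)
    (fun u => by rw [(hf u).deriv, h u]) u v

lemma const_lim {f f' : ℝ → ℝ} {c : ℝ} (hf : ∀ u, HasDerivAt f (f' u) u) (h : ∀ u, f' u = 0)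
    (hl : Filter.Tendsto f Filter.atBot (nhds c)) (u : ℝ) : f u = c := by
  have : f = fun _ => f u := by
    ext v; exact const0 hf h v u
  rw [this] at hl
  exact tendsto_nhds_unique tendsto_const_nhds hl

/-- denominator -/
def NN (p q : ℝ) : ℝ := 1 + p ^ 2 + q ^ 2 + p ^ 2 * q ^ 2 / 9

lemma NN_pos (p q : ℝ) : 0 < NN p q := by unfold NN; positivity

def XT (p q : ℝ) : ℝ := (1 - p ^ 2 - q ^ 2 + p ^ 2 * q ^ 2 / 9) / NN p q
def XA (p q : ℝ) : ℝ := 2 * p * (1 - q ^ 2 / 3) / NN p q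
def XB (p q : ℝ) : ℝ := 2 * q * (1 + p ^ 2 / 3) / NN p q

lemma X_inv (p q : ℝ) (hp : p ≠ 0) (hq : q ≠ 0) :
    XT (-3 / p) (3 / q) = XT p q ∧ XA (-3 / p) (3 / q) = XA p q ∧
      XB (-3 / p) (3 / q) = XB p q := by
  have e : NN (-3 / p) (3 / q) = 9 / (p ^ 2 * q ^ 2) * NN p q := by
    unfold NN; field_simp; ring
  have := (NN_pos p q).ne'
  refine ⟨?_, ?_, ?_⟩
  · unfold XT; rw [e]; field_simp; ring
  · unfold XA; rw [e]; field_simp; ring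
  · unfold XB; rw [e]; field_simp; ring

/-- pointwise algebra -/
lemma alg_point (t A B L1 L2 l x y p q D : ℝ) (hc : t ^ 2 + A ^ 2 + B ^ 2 = 1)
    (hF1 : A ^ 2 - L1 ^ 2 + l ^ 2 / 3 = 0) (hF2 : B ^ 2 - L2 ^ 2 / 4 - l ^ 2 / 3 = 0)
    (hL : t * l = A * L2 - B * L1) (hl : l ≠ 0) (hx : x = L1 + A) (hy : y = B + L2 / 2)
    (hp : p = l / y) (hq : q = l / x) (hD : D = 4 * l / (x * y)) :
    x ≠ 0 ∧ y ≠ 0 ∧ t = (1 - p ^ 2 - q ^ 2 + p ^ 2 * q ^ 2 / 9) / D ∧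
    A = 2 * p * (1 - q ^ 2 / 3) / D ∧ B = 2 * q * (1 + p ^ 2 / 3) / D ∧ l = 4 * p * q / D ∧
    D ^ 2 = NN p q ^ 2 := by
  have hxx : x * (L1 - A) = l ^ 2 / 3 := by rw [hx]; linarith
  have hyy : y * (B - L2 / 2) = l ^ 2 / 3 := by rw [hy]; linarith
  have hl2 : l ^ 2 / 3 ≠ 0 := by positivity
  have hx0 : x ≠ 0 := by rintro h; rw [h] at hxx; rw [zero_mul] at hxx; exact hl2 hxx.symm
  have hy0 : y ≠ 0 := by rintro h; rw [h] at hyy; rw [zero_mul] at hyy; exact hl2 hyy.symm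
  have eX : L1 - A = l ^ 2 / 3 / x := by rw [eq_div_iff hx0]; linarith
  have eY : B - L2 / 2 = l ^ 2 / 3 / y := by rw [eq_div_iff hy0]; linarith
  have hA : A = (x - l ^ 2 / 3 / x) / 2 := by linarith
  have hL1 : L1 = (x + l ^ 2 / 3 / x) / 2 := by linarith
  have hB : B = (y + l ^ 2 / 3 / y) / 2 := by linarith
  have hL2 : L2 = (y - l ^ 2 / 3 / y) := by linarith
  have hD0 : D ≠ 0 := by rw [hD]; positivity
  have ht : t = (1 - p ^ 2 - q ^ 2 + p ^ 2 * q ^ 2 / 9) / D := by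
    apply mul_right_cancel₀ hl
    rw [hL, hA, hL1, hB, hL2, hp, hq, hD]
    field_simp
    ring
  have hA' : A = 2 * p * (1 - q ^ 2 / 3) / D := by
    rw [hA, hp, hq, hD]; field_simp; norm_num
  have hB' : B = 2 * q * (1 + p ^ 2 / 3) / D := by
    rw [hB, hp, hq, hD]; field_simp; norm_num
  have hl' : l = 4 * p * q / D := by
    rw [hp, hq, hD]; field_simp
  refine ⟨hx0, hy0, ht, hA', hB', hl', ?_⟩
  rw [ht, hA', hB'] at hc
  field_simp at hc
  unfold NN
  linarith

lemma neumann (t A B t' A' B' e : ℝ → ℝ)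
    (ht : ∀ u, HasDerivAt t (t' u) u) (hA : ∀ u, HasDerivAt A (A' u) u)
    (hB : ∀ u, HasDerivAt B (B' u) u)
    (ht' : ∀ u, HasDerivAt t' (- e u * t u) u) (hA' : ∀ u, HasDerivAt A' (A u - e u * A u) u)
    (hB' : ∀ u, HasDerivAt B' (4 * B u - e u * B u) u)
    (hc : ∀ u, t u ^ 2 + A u ^ 2 + B u ^ 2 = 1)
    (h0 : ∀ u, t u * t' u + A u * A' u + B u * B' u = 0)
    (lF1 : Filter.Tendsto (fun u => A u ^ 2 - (t u * A' u - A u * t' u) ^ 2 +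
      (A u * B' u - B u * A' u) ^ 2 / 3) Filter.atBot (nhds 0))
    (lF2 : Filter.Tendsto (fun u => B u ^ 2 - (t u * B' u - B u * t' u) ^ 2 / 4 -
      (A u * B' u - B u * A' u) ^ 2 / 3) Filter.atBot (nhds 0))
    (nA : ¬ ∀ u, A u = 0) (nB : ¬ ∀ u, B u = 0) :
    ∃ ε p0 q0 : ℝ, (ε = 1 ∨ ε = -1) ∧ p0 ≠ 0 ∧ q0 ≠ 0 ∧ ∀ u,
      t u = ε * XT (p0 * Real.exp u) (q0 * Real.exp u ^ 2) ∧
      A u = ε * XA (p0 * Real.exp u) (q0 * Real.exp u ^ 2) ∧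
      B u = ε * XB (p0 * Real.exp u) (q0 * Real.exp u ^ 2) := by
  set L1 : ℝ → ℝ := fun u => t u * A' u - A u * t' u with hL1
  set L2 : ℝ → ℝ := fun u => t u * B' u - B u * t' u with hL2
  set l : ℝ → ℝ := fun u => A u * B' u - B u * A' u with hl
  have dL1 : ∀ u, HasDerivAt L1 (t u * A u) u := by
    intro u
    refine (((ht u).mul (hA' u)).sub ((hA u).mul (ht' u))).congr_deriv ?_
    ring
  have dL2 : ∀ u, HasDerivAt L2 (4 * t u * B u) u := by
    intro u
    refine (((ht u).mul (hB' u)).sub ((hB u).mul (ht' u))).congr_deriv ?_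
    ring
  have dl : ∀ u, HasDerivAt l (3 * A u * B u) u := by
    intro u
    refine (((hA u).mul (hB' u)).sub ((hB u).mul (hA' u))).congr_deriv ?_
    ring
  have eA' : ∀ u, A' u = t u * L1 u - B u * l u := by
    intro u; simp only [hL1, hl]
    linear_combination A' u * (-hc u) + A u * h0 u
  have eB' : ∀ u, B' u = t u * L2 u + A u * l u := by
    intro u; simp only [hL2, hl]
    linear_combination B' u * (-hc u) + B u * h0 u
  have eL : ∀ u, t u * l u = A u * L2 u - B u * L1 u := by
    intro u; simp only [hL1, hL2, hl]; ring
  have F1 : ∀ u, A u ^ 2 - L1 u ^ 2 + l u ^ 2 / 3 = 0 := by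
    refine const_lim (f := fun u => A u ^ 2 - L1 u ^ 2 + l u ^ 2 / 3)
      (fun u => (((hA u).pow 2).sub ((dL1 u).pow 2)).add (((dl u).pow 2).div_const 3)) ?_ lF1
    intro u
    simp only [Nat.cast_ofNat]
    linear_combination 2 * A u * eA' u
  have F2 : ∀ u, B u ^ 2 - L2 u ^ 2 / 4 - l u ^ 2 / 3 = 0 := by
    refine const_lim (f := fun u => B u ^ 2 - L2 u ^ 2 / 4 - l u ^ 2 / 3)
      (fun u => (((hB u).pow 2).sub (((dL2 u).pow 2).div_const 4)).sub
        (((dl u).pow 2).div_const 3)) ?_ lF2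
    intro u
    simp only [Nat.cast_ofNat]
    linear_combination 2 * B u * eB' u
  have hAle : ∀ u, A u ^ 2 ≤ 1 := fun u => by nlinarith [hc u, sq_nonneg (t u), sq_nonneg (B u)]
  have hBle : ∀ u, B u ^ 2 ≤ 1 := fun u => by nlinarith [hc u, sq_nonneg (t u), sq_nonneg (A u)]
  have htle : ∀ u, t u ^ 2 ≤ 1 := fun u => by nlinarith [hc u, sq_nonneg (B u), sq_nonneg (A u)]
  have hAB : ∀ u, (A u * B u) ^ 2 ≤ 2 * l u ^ 2 := by
    intro u
    have h1 : (A u * L2 u) ^ 2 ≤ 2 * (t u * l u) ^ 2 + 2 * (B u * L1 u) ^ 2 := by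
      have : A u * L2 u = t u * l u + B u * L1 u := by linarith [eL u]
      rw [this]; nlinarith [sq_nonneg (t u * l u - B u * L1 u)]
    have h2 : L2 u ^ 2 = 4 * B u ^ 2 - 4 / 3 * l u ^ 2 := by linarith [F2 u]
    have h3 : L1 u ^ 2 = A u ^ 2 + l u ^ 2 / 3 := by linarith [F1 u]
    rw [mul_pow, h2, mul_pow, mul_pow, h3] at h1
    rw [mul_pow]
    have g1 := mul_le_mul_of_nonneg_right (hAle u) (sq_nonneg (l u))
    have g2 := mul_le_mul_of_nonneg_right (hBle u) (sq_nonneg (l u))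
    have g3 := mul_le_mul_of_nonneg_right (htle u) (sq_nonneg (l u))
    nlinarith
  have hlb : ∀ u, |3 * A u * B u| ≤ 6 * |l u| := by
    intro u
    have h1 : |A u * B u| ≤ |2 * l u| := by
      apply sq_le_sq.1
      nlinarith [hAB u, sq_nonneg (l u)]
    rw [mul_assoc, abs_mul]
    rw [abs_mul (2 : ℝ)] at h1
    norm_num at h1 ⊢
    linarith
  have hlne : ∀ u, l u ≠ 0 := by
    intro u0 hu0
    have hz := gron0 dl hlb hu0
    have hA1 : ∀ u, |A' u| ≤ 1 * |A u| := by
      intro u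
      rw [one_mul]
      apply sq_le_sq.1
      have h1 := F1 u
      rw [eA' u, hz u]
      rw [hz u] at h1
      have h3 : L1 u ^ 2 = A u ^ 2 := by linarith
      have := mul_le_mul_of_nonneg_right (htle u) (sq_nonneg (A u))
      calc (t u * L1 u - B u * 0) ^ 2 = t u ^ 2 * L1 u ^ 2 := by ring
        _ ≤ _ := by rw [h3]; linarith
    have hB1 : ∀ u, |B' u| ≤ 2 * |B u| := by
      intro u
      have : |B' u| ≤ |2 * B u| := by
        apply sq_le_sq.1
        have h1 := F2 u
        rw [eB' u, hz u]
        rw [hz u] at h1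
        have h3 : L2 u ^ 2 = 4 * B u ^ 2 := by linarith
        have := mul_le_mul_of_nonneg_right (htle u) (sq_nonneg (B u))
        calc (t u * L2 u + A u * 0) ^ 2 = t u ^ 2 * L2 u ^ 2 := by ring
          _ ≤ _ := by rw [h3]; linarith
      rw [abs_mul] at this
      simpa using this
    have h1 : A 0 * B 0 = 0 := by
      have := hAB 0
      rw [hz 0] at this
      have h2 : (A 0 * B 0) ^ 2 = 0 := le_antisymm (by linarith) (sq_nonneg _)
      exact pow_eq_zero_iff two_ne_zero |>.1 h2
    rcases mul_eq_zero.1 h1 with h | h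
    · exact nA (gron0 hA hA1 h)
    · exact nB (gron0 hB hB1 h)
  set x : ℝ → ℝ := fun u => L1 u + A u with hx
  set y : ℝ → ℝ := fun u => B u + L2 u / 2 with hy
  set p : ℝ → ℝ := fun u => l u / y u with hp
  set q : ℝ → ℝ := fun u => l u / x u with hq
  set D : ℝ → ℝ := fun u => 4 * l u / (x u * y u) with hD
  have alg := fun u => alg_point (t u) (A u) (B u) (L1 u) (L2 u) (l u) (x u) (y u) (p u) (q u)
    (D u) (hc u) (F1 u) (F2 u) (eL u) (hlne u) rfl rfl rfl rfl rfl
  have hx0 := fun u => (alg u).1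
  have hy0 := fun u => (alg u).2.1
  have hp0 : ∀ u, p u ≠ 0 := fun u => div_ne_zero (hlne u) (hy0 u)
  have hq0 : ∀ u, q u ≠ 0 := fun u => div_ne_zero (hlne u) (hx0 u)
  have hD0 : ∀ u, D u ≠ 0 := fun u =>
    div_ne_zero (mul_ne_zero (by norm_num) (hlne u)) (mul_ne_zero (hx0 u) (hy0 u))
  have dx : ∀ u, HasDerivAt x (t u * x u - B u * l u) u := by
    intro u
    refine ((dL1 u).add (hA u)).congr_deriv ?_
    rw [eA' u]; simp only [hx]; ring
  have dy : ∀ u, HasDerivAt y (2 * t u * y u + A u * l u) u := by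
    intro u
    refine ((hB u).add ((dL2 u).div_const 2)).congr_deriv ?_
    rw [eB' u]; simp only [hy]; ring
  have dp : ∀ u, HasDerivAt p (NN (p u) (q u) / D u * p u) u := by
    intro u
    refine ((dl u).div (dy u) (hy0 u)).congr_deriv ?_
    obtain ⟨-, -, h1, h2, h3, h4, -⟩ := alg u
    have hyp : y u = l u / p u := by simp only [hp]; have := hlne u; have := hy0 u; field_simp
    rw [hyp, h1, h2, h3, h4]
    have := hp0 u; have := hq0 u; have := hD0 u
    generalize p u = P at *
    generalize q u = R at *
    generalize D u = S at *
    unfold NN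
    field_simp
    ring
  have dq : ∀ u, HasDerivAt q (2 * (NN (p u) (q u) / D u) * q u) u := by
    intro u
    refine ((dl u).div (dx u) (hx0 u)).congr_deriv ?_
    obtain ⟨-, -, h1, h2, h3, h4, -⟩ := alg u
    have hxq : x u = l u / q u := by simp only [hq]; have := hlne u; have := hx0 u; field_simp
    rw [hxq, h1, h2, h3, h4]
    have := hp0 u; have := hq0 u; have := hD0 u
    generalize p u = P at *
    generalize q u = R at *
    generalize D u = S at *
    unfold NN
    field_simp
    ring
  have cp : Continuous p := continuous_iff_continuousAt.2 fun u => (dp u).continuousAt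
  have cq : Continuous q := continuous_iff_continuousAt.2 fun u => (dq u).continuousAt
  have cl : Continuous l := continuous_iff_continuousAt.2 fun u => (dl u).continuousAt
  have cx : Continuous x := continuous_iff_continuousAt.2 fun u => (dx u).continuousAt
  have cy : Continuous y := continuous_iff_continuousAt.2 fun u => (dy u).continuousAt
  have cD : Continuous D :=
    (continuous_const.mul cl).div (cx.mul cy) (fun u => mul_ne_zero (hx0 u) (hy0 u))
  have cN : Continuous (fun u => NN (p u) (q u) / D u) := by
    refine Continuous.div ?_ cD hD0
    unfold NN; fun_prop
  have hsq : ∀ u, (NN (p u) (q u) / D u) ^ 2 = 1 := by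
    intro u
    rw [div_pow, (alg u).2.2.2.2.2.2, div_self]
    have := NN_pos (p u) (q u); positivity
  have hε : ∃ ε : ℝ, (ε = 1 ∨ ε = -1) ∧ ∀ u, NN (p u) (q u) / D u = ε := by
    rcases isPreconnected_univ.eq_one_or_eq_neg_one_of_sq_eq cN.continuousOn
      (fun u _ => hsq u) with h | h
    · exact ⟨1, Or.inl rfl, fun u => h (Set.mem_univ u)⟩
    · exact ⟨-1, Or.inr rfl, fun u => h (Set.mem_univ u)⟩
  obtain ⟨ε, hε1, hε⟩ := hε
  have hE : ∀ c u : ℝ, HasDerivAt (fun u => Real.exp (c * u)) (Real.exp (c * u) * c) u := by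
    intro c u
    simpa using ((hasDerivAt_id u).const_mul c).exp
  have pu : ∀ u, p u = p 0 * Real.exp (ε * u) := by
    intro u
    have := const0 (f := fun u => p u * Real.exp (-ε * u))
      (fun u => (dp u).mul (hE (-ε) u)) (fun u => by rw [hε u]; ring) u 0
    simp only [mul_zero, Real.exp_zero, mul_one] at this
    rw [← this, mul_assoc, ← Real.exp_add]
    simp
  have qu : ∀ u, q u = q 0 * Real.exp (ε * u) ^ 2 := by
    intro u
    have := const0 (f := fun u => q u * Real.exp (-2 * ε * u))
      (fun u => (dq u).mul (hE (-2 * ε) u)) (fun u => by rw [hε u]; ring) u 0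
    simp only [mul_zero, Real.exp_zero, mul_one] at this
    rw [← this, mul_assoc, ← Real.exp_nat_mul, ← Real.exp_add]
    have : -2 * ε * u + ((2 : ℕ) : ℝ) * (ε * u) = 0 := by push_cast; ring
    rw [this]; simp
  have hDi : ∀ u, (D u)⁻¹ = ε * (NN (p u) (q u))⁻¹ := by
    intro u
    rw [← hε u]
    have := hD0 u
    have := (NN_pos (p u) (q u)).ne'
    field_simp
  have fin : ∀ u, t u = ε * XT (p u) (q u) ∧ A u = ε * XA (p u) (q u) ∧
      B u = ε * XB (p u) (q u) := by
    intro u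
    obtain ⟨-, -, h1, h2, h3, -, -⟩ := alg u
    refine ⟨h1.trans ?_, h2.trans ?_, h3.trans ?_⟩
    · rw [div_eq_mul_inv, hDi u]; unfold XT; ring
    · rw [div_eq_mul_inv, hDi u]; unfold XA; ring
    · rw [div_eq_mul_inv, hDi u]; unfold XB; ring
  rcases hε1 with h | h
  · refine ⟨ε, p 0, q 0, Or.inl h, hp0 0, hq0 0, fun u => ?_⟩
    have h1 := pu u
    have h2 := qu u
    rw [h, one_mul] at h1 h2
    rw [← h1, ← h2]
    exact fin u
  · refine ⟨ε, -3 / p 0, 3 / q 0, Or.inr h, div_ne_zero (by norm_num) (hp0 0),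
      div_ne_zero (by norm_num) (hq0 0), fun u => ?_⟩
    have h1 : -3 / p u = -3 / p 0 * Real.exp u := by
      rw [pu u, h, neg_one_mul, Real.exp_neg]
      have := hp0 0
      field_simp
    have h2 : 3 / q u = 3 / q 0 * Real.exp u ^ 2 := by
      rw [qu u, h, neg_one_mul, Real.exp_neg]
      have := hq0 0
      field_simp
    rw [← h1, ← h2]
    obtain ⟨e1, e2, e3⟩ := X_inv (p u) (q u) (hp0 u) (hq0 u)
    rw [e1, e2, e3]
    exact fin u

lemma hd_re {f : ℝ → ℂ} {f' : ℂ} {u : ℝ} (h : HasDerivAt f f' u) :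
    HasDerivAt (fun u => (f u).re) f'.re u :=
  (Complex.reCLM.hasFDerivAt.comp_hasDerivAt u h)

lemma hd_im {f : ℝ → ℂ} {f' : ℂ} {u : ℝ} (h : HasDerivAt f f' u) :
    HasDerivAt (fun u => (f u).im) f'.im u :=
  (Complex.imCLM.hasFDerivAt.comp_hasDerivAt u h)

lemma unit_dir (a a' : ℂ) (h : a.re * a'.im - a.im * a'.re = 0) :
    ∃ c s : ℝ, c ^ 2 + s ^ 2 = 1 ∧ c * a.im - s * a.re = 0 ∧ c * a'.im - s * a'.re = 0 := by
  have key : ∀ w : ℂ, w ≠ 0 → (w.re / ‖w‖) ^ 2 + (w.im / ‖w‖) ^ 2 = 1 := by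
    intro w hw
    have h1 : ‖w‖ ≠ 0 := norm_ne_zero_iff.2 hw
    have h2 : ‖w‖ ^ 2 = w.re ^ 2 + w.im ^ 2 := by
      rw [Complex.sq_norm, Complex.normSq_apply]; ring
    field_simp
    rw [h2]
  by_cases ha : a = 0
  · by_cases ha' : a' = 0
    · exact ⟨1, 0, by norm_num, by simp [ha], by simp [ha']⟩
    · exact ⟨_, _, key a' ha', by simp [ha], by ring⟩
  · refine ⟨_, _, key a ha, by ring, ?_⟩
    rw [div_mul_eq_mul_div, div_mul_eq_mul_div, ← sub_div, h, zero_div]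

lemma phase (a a' : ℝ → ℂ) (e : ℝ → ℝ) (k : ℝ) (hk0 : 0 ≤ k)
    (ha : ∀ u, HasDerivAt a (a' u) u)
    (ha' : ∀ u, HasDerivAt a' (((k - e u : ℝ) : ℂ) * a u) u) (he : ∀ u, |e u| ≤ 8)
    (hw : (a 0).re * (a' 0).im - (a 0).im * (a' 0).re = 0) :
    ∃ c : ℂ, Complex.normSq c = 1 ∧ ∃ A A' : ℝ → ℝ, (∀ u, a u = (A u : ℂ) * c) ∧
      (∀ u, a' u = (A' u : ℂ) * c) ∧
      (∀ u, HasDerivAt A (A' u) u) ∧ (∀ u, HasDerivAt A' (k * A u - e u * A u) u) := by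
  obtain ⟨c, s, hcs, h1, h2⟩ := unit_dir (a 0) (a' 0) hw
  have dre := fun u => hd_re (ha u)
  have dim := fun u => hd_im (ha u)
  have dre' := fun u => hd_re (ha' u)
  have dim' := fun u => hd_im (ha' u)
  simp only [Complex.re_ofReal_mul, Complex.im_ofReal_mul] at dre' dim'
  set f : ℝ → ℝ := fun u => c * (a u).im - s * (a u).re with hf
  set f' : ℝ → ℝ := fun u => c * (a' u).im - s * (a' u).re with hf'
  have df : ∀ u, HasDerivAt f (f' u) u := fun u => ((dim u).const_mul c).sub ((dre u).const_mul s)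
  have df' : ∀ u, HasDerivAt f' ((k - e u) * f u) u := fun u =>
    (((dim' u).const_mul c).sub ((dre' u).const_mul s)).congr_deriv (by simp only [hf]; ring)
  have hg : ∀ u, f u ^ 2 + f' u ^ 2 = 0 := by
    refine gron0 (f := fun u => f u ^ 2 + f' u ^ 2) (K := 9 + k) (u0 := 0)
      (fun u => ((df u).pow 2).add ((df' u).pow 2)) ?_ ?_
    · intro u
      have h3 : |f u ^ 2 + f' u ^ 2| = f u ^ 2 + f' u ^ 2 := abs_of_nonneg (by positivity)
      rw [h3]
      have h4 : (↑2 * f u ^ (2 - 1) * f' u + ↑2 * f' u ^ (2 - 1) * ((k - e u) * f u) : ℝ) =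
        (1 + k - e u) * (2 * f u * f' u) := by push_cast; ring
      have h5 : |1 + k - e u| ≤ 9 + k := by
        have := abs_le.1 (he u)
        rw [abs_le]; constructor <;> linarith
      have h6 : |2 * f u * f' u| ≤ f u ^ 2 + f' u ^ 2 := by
        rw [abs_le]; constructor <;> nlinarith [sq_nonneg (f u + f' u), sq_nonneg (f u - f' u)]
      norm_num at h4 ⊢
      rw [h4, abs_mul]
      exact mul_le_mul h5 h6 (abs_nonneg _) (by linarith)
    · simp only [hf, hf', h1, h2]; norm_num
  have f0 : ∀ u, f u = 0 := fun u => by nlinarith [hg u, sq_nonneg (f u), sq_nonneg (f' u)]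
  have f0' : ∀ u, f' u = 0 := fun u => by nlinarith [hg u, sq_nonneg (f u), sq_nonneg (f' u)]
  simp only [hf] at f0
  simp only [hf'] at f0'
  refine ⟨⟨c, s⟩, by rw [Complex.normSq_mk]; linarith, fun u => c * (a u).re + s * (a u).im,
    fun u => c * (a' u).re + s * (a' u).im, fun u => ?_, fun u => ?_, fun u => ?_, fun u => ?_⟩
  · apply Complex.ext
    · rw [Complex.re_ofReal_mul]; simp only
      linear_combination -(a u).re * hcs - s * f0 u
    · rw [Complex.im_ofReal_mul]; simp only
      linear_combination -(a u).im * hcs + c * f0 u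
  · apply Complex.ext
    · rw [Complex.re_ofReal_mul]; simp only
      linear_combination -(a' u).re * hcs - s * f0' u
    · rw [Complex.im_ofReal_mul]; simp only
      linear_combination -(a' u).im * hcs + c * f0' u
  · exact ((dre u).const_mul c).add ((dim u).const_mul s)
  · exact (((dre' u).const_mul c).add ((dim' u).const_mul s)).congr_deriv (by ring)

lemma tendsto_ofReal_mul_unit {A : ℝ → ℝ} {c : ℂ} (hc : Complex.normSq c = 1)
    (h : Filter.Tendsto (fun u => (A u : ℂ) * c) Filter.atBot (nhds 0)) :
    Filter.Tendsto A Filter.atBot (nhds 0) := by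
  have h1 := h.norm
  have hn : ‖c‖ = 1 := by
    have := Complex.sq_norm c
    rw [hc] at this
    nlinarith [norm_nonneg c]
  simp only [norm_mul, hn, mul_one, norm_zero, Complex.norm_real] at h1
  exact tendsto_zero_iff_norm_tendsto_zero.2 h1

lemma ode_complex (t t' : ℝ → ℝ) (a a' b b' : ℝ → ℂ) (e : ℝ → ℝ)
    (ht : ∀ u, HasDerivAt t (t' u) u) (ha : ∀ u, HasDerivAt a (a' u) u)
    (hb : ∀ u, HasDerivAt b (b' u) u)
    (ht' : ∀ u, HasDerivAt t' (- e u * t u) u)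
    (ha' : ∀ u, HasDerivAt a' (((1 - e u : ℝ) : ℂ) * a u) u)
    (hb' : ∀ u, HasDerivAt b' (((4 - e u : ℝ) : ℂ) * b u) u)
    (hc : ∀ u, t u ^ 2 + Complex.normSq (a u) + Complex.normSq (b u) = 1)
    (he : ∀ u, e u = t' u ^ 2 + Complex.normSq (a' u) + Complex.normSq (b' u) +
      Complex.normSq (a u) + 4 * Complex.normSq (b u))
    (la : Filter.Tendsto a Filter.atBot (nhds 0)) (lb : Filter.Tendsto b Filter.atBot (nhds 0))
    (lt' : Filter.Tendsto t' Filter.atBot (nhds 0))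
    (la' : Filter.Tendsto a' Filter.atBot (nhds 0))
    (lb' : Filter.Tendsto b' Filter.atBot (nhds 0))
    (na : ¬ ∀ u, a u = 0) (nb : ¬ ∀ u, b u = 0) :
    ∃ ε p0 q0 : ℝ, ∃ c1 c2 : ℂ, (ε = 1 ∨ ε = -1) ∧ p0 ≠ 0 ∧ q0 ≠ 0 ∧
      Complex.normSq c1 = 1 ∧ Complex.normSq c2 = 1 ∧ ∀ u,
      t u = ε * XT (p0 * Real.exp u) (q0 * Real.exp u ^ 2) ∧
      a u = ((ε * XA (p0 * Real.exp u) (q0 * Real.exp u ^ 2) : ℝ) : ℂ) * c1 ∧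
      b u = ((ε * XB (p0 * Real.exp u) (q0 * Real.exp u ^ 2) : ℝ) : ℂ) * c2 := by
  have are := fun u => hd_re (ha u)
  have aim := fun u => hd_im (ha u)
  have are' := fun u => hd_re (ha' u)
  have aim' := fun u => hd_im (ha' u)
  have bre := fun u => hd_re (hb u)
  have bim := fun u => hd_im (hb u)
  have bre' := fun u => hd_re (hb' u)
  have bim' := fun u => hd_im (hb' u)
  simp only [Complex.re_ofReal_mul, Complex.im_ofReal_mul] at are' aim' bre' bim'
  simp only [Complex.normSq_apply] at hc he
  have lre : ∀ {f : ℝ → ℂ}, Filter.Tendsto f Filter.atBot (nhds 0) →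
      Filter.Tendsto (fun u => (f u).re) Filter.atBot (nhds 0) := fun h => by
    simpa [Function.comp_def] using (Complex.continuous_re.tendsto 0).comp h
  have lim : ∀ {f : ℝ → ℂ}, Filter.Tendsto f Filter.atBot (nhds 0) →
      Filter.Tendsto (fun u => (f u).im) Filter.atBot (nhds 0) := fun h => by
    simpa [Function.comp_def] using (Complex.continuous_im.tendsto 0).comp h
  have h0 : ∀ u, t u * t' u + (a u).re * (a' u).re + (a u).im * (a' u).im +
      (b u).re * (b' u).re + (b u).im * (b' u).im = 0 := by
    intro u
    have d := ((((ht u).pow 2).add (((are u).mul (are u)).add ((aim u).mul (aim u)))).add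
      (((bre u).mul (bre u)).add ((bim u).mul (bim u))))
    have d2 : HasDerivAt (fun _ : ℝ => (1 : ℝ)) _ u :=
      d.congr_of_eventuallyEq (Filter.Eventually.of_forall fun v => by simpa using (hc v).symm)
    have := d2.unique (hasDerivAt_const u 1)
    norm_num at this
    linarith
  have hen : ∀ u, t' u ^ 2 + (a' u).re ^ 2 + (a' u).im ^ 2 + (b' u).re ^ 2 + (b' u).im ^ 2
      - (a u).re ^ 2 - (a u).im ^ 2 - 4 * (b u).re ^ 2 - 4 * (b u).im ^ 2 = 0 := by
    refine const_lim (f := fun u => t' u ^ 2 + (a' u).re ^ 2 + (a' u).im ^ 2 + (b' u).re ^ 2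
      + (b' u).im ^ 2 - (a u).re ^ 2 - (a u).im ^ 2 - 4 * (b u).re ^ 2 - 4 * (b u).im ^ 2)
      (fun u => ((((((((ht' u).pow 2).add ((are' u).pow 2)).add ((aim' u).pow 2)).add
        ((bre' u).pow 2)).add ((bim' u).pow 2)).sub ((are u).pow 2)).sub ((aim u).pow 2)).sub
        (((bre u).pow 2).const_mul 4) |>.sub (((bim u).pow 2).const_mul 4)) ?_ ?_
    · intro u
      norm_num
      linear_combination (-2 * e u) * h0 u
    · have := (((((((((lt'.pow 2).add ((lre la').pow 2)).add ((lim la').pow 2)).add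
        ((lre lb').pow 2)).add ((lim lb').pow 2)).sub ((lre la).pow 2)).sub ((lim la).pow 2)).sub
        (((lre lb).pow 2).const_mul 4)).sub (((lim lb).pow 2).const_mul 4))
      simpa using this
  have hb8 : ∀ u, |e u| ≤ 8 := by
    intro u
    have h1 := hen u
    have h2 := hc u
    rw [he u, abs_of_nonneg]
    · nlinarith [sq_nonneg (t u), sq_nonneg (a u).re, sq_nonneg (a u).im]
    · nlinarith [sq_nonneg (t' u), sq_nonneg (a u).re, sq_nonneg (a u).im, sq_nonneg (a' u).re,
        sq_nonneg (a' u).im, sq_nonneg (b u).re, sq_nonneg (b u).im, sq_nonneg (b' u).re,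
        sq_nonneg (b' u).im]
  have wa : ∀ u, (a u).re * (a' u).im - (a u).im * (a' u).re = 0 := by
    refine const_lim (f := fun u => (a u).re * (a' u).im - (a u).im * (a' u).re)
      (fun u => ((are u).mul (aim' u)).sub ((aim u).mul (are' u))) (fun u => by ring) ?_
    simpa using ((lre la).mul (lim la')).sub ((lim la).mul (lre la'))
  have wb : ∀ u, (b u).re * (b' u).im - (b u).im * (b' u).re = 0 := by
    refine const_lim (f := fun u => (b u).re * (b' u).im - (b u).im * (b' u).re)
      (fun u => ((bre u).mul (bim' u)).sub ((bim u).mul (bre' u))) (fun u => by ring) ?_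
    simpa using ((lre lb).mul (lim lb')).sub ((lim lb).mul (lre lb'))
  obtain ⟨c1, hc1, A, A', eA, eA', dA, dA'⟩ := phase a a' e 1 (by norm_num) ha ha' hb8 (wa 0)
  obtain ⟨c2, hc2, B, B', eB, eB', dB, dB'⟩ := phase b b' e 4 (by norm_num) hb hb' hb8 (wb 0)
  have lA : Filter.Tendsto A Filter.atBot (nhds 0) :=
    tendsto_ofReal_mul_unit hc1 (by rw [funext eA] at la; exact la)
  have lA' : Filter.Tendsto A' Filter.atBot (nhds 0) :=
    tendsto_ofReal_mul_unit hc1 (by rw [funext eA'] at la'; exact la')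
  have lB : Filter.Tendsto B Filter.atBot (nhds 0) :=
    tendsto_ofReal_mul_unit hc2 (by rw [funext eB] at lb; exact lb)
  have lB' : Filter.Tendsto B' Filter.atBot (nhds 0) :=
    tendsto_ofReal_mul_unit hc2 (by rw [funext eB'] at lb'; exact lb')
  rw [Complex.normSq_apply] at hc1 hc2
  have hcc : ∀ u, t u ^ 2 + A u ^ 2 + B u ^ 2 = 1 := by
    intro u
    have := hc u
    rw [eA u, eB u] at this
    simp only [Complex.re_ofReal_mul, Complex.im_ofReal_mul] at this
    linear_combination this - A u ^ 2 * hc1 - B u ^ 2 * hc2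
  have h00 : ∀ u, t u * t' u + A u * A' u + B u * B' u = 0 := by
    intro u
    have := h0 u
    rw [eA u, eB u, eA' u, eB' u] at this
    simp only [Complex.re_ofReal_mul, Complex.im_ofReal_mul] at this
    linear_combination this - A u * A' u * hc1 - B u * B' u * hc2
  have tb : ∀ u, ‖t u‖ ≤ 1 := by
    intro u
    rw [Real.norm_eq_abs, abs_le_one_iff_mul_self_le_one]
    nlinarith [hcc u, sq_nonneg (A u), sq_nonneg (B u)]
  have ltm : ∀ {g : ℝ → ℝ}, Filter.Tendsto g Filter.atBot (nhds 0) →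
      Filter.Tendsto (fun u => t u * g u) Filter.atBot (nhds 0) := by
    intro g hg
    refine squeeze_zero_norm (fun u => ?_) (tendsto_zero_iff_norm_tendsto_zero.1 hg)
    rw [norm_mul]
    exact mul_le_of_le_one_left (norm_nonneg _) (tb u)
  obtain ⟨ε, p0, q0, hε, hp0, hq0, H⟩ := neumann t A B t' A' B' e ht dA dB ht'
    (fun u => by simpa using dA' u) dB' hcc h00
    (by simpa using ((lA.pow 2).sub (((ltm lA').sub (lA.mul lt')).pow 2)).add
          ((((lA.mul lB').sub (lB.mul lA')).pow 2).div_const 3))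
    (by simpa using ((lB.pow 2).sub ((((ltm lB').sub (lB.mul lt')).pow 2).div_const 4)).sub
          ((((lA.mul lB').sub (lB.mul lA')).pow 2).div_const 3))
    (fun h => na fun u => by rw [eA u, h u]; simp)
    (fun h => nb fun u => by rw [eB u, h u]; simp)
  refine ⟨ε, p0, q0, c1, c2, hε, hp0, hq0, by rw [Complex.normSq_apply, hc1],
    by rw [Complex.normSq_apply, hc2], fun u => ⟨(H u).1, ?_, ?_⟩⟩
  · rw [← (H u).2.1, eA u]
  · rw [← (H u).2.2, eB u]

def ee (i : Fin 3) : E3 := EuclideanSpace.single i (1 : ℝ)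

def VV (a b c : ℝ) : E3 := a • ee 0 + b • ee 1 + c • ee 2

@[simp] lemma VV_0 (a b c : ℝ) : VV a b c 0 = a := by simp [VV, ee]
@[simp] lemma VV_1 (a b c : ℝ) : VV a b c 1 = b := by simp [VV, ee]
@[simp] lemma VV_2 (a b c : ℝ) : VV a b c 2 = c := by simp [VV, ee]

lemma E3_ext {x y : E3} (h0 : x 0 = y 0) (h1 : x 1 = y 1) (h2 : x 2 = y 2) : x = y := by
  ext i; fin_cases i <;> assumption

lemma VV_eta (x : E3) : VV (x 0) (x 1) (x 2) = x := E3_ext (by simp) (by simp) (by simp)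

lemma smul_VV (k a b c : ℝ) : k • VV a b c = VV (k * a) (k * b) (k * c) :=
  E3_ext (by simp) (by simp) (by simp)

lemma rot3_VV (α a b c : ℝ) : rot3 α (VV a b c) =
    VV (Real.cos α * a - Real.sin α * b) (Real.sin α * a + Real.cos α * b) c :=
  E3_ext (by simp [rot3]) (by simp [rot3]) (by simp [rot3])

lemma VV_ne0 {a b c : ℝ} (h : a ≠ 0 ∨ b ≠ 0 ∨ c ≠ 0) : VV a b c ≠ 0 := by
  intro h0
  have e0 := congrArg (fun x : E3 => x 0) h0
  have e1 := congrArg (fun x : E3 => x 1) h0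
  have e2 := congrArg (fun x : E3 => x 2) h0
  simp at e0 e1 e2
  simp_all

lemma normsq_E3 (x : E3) : ‖x‖ ^ 2 = x 0 ^ 2 + x 1 ^ 2 + x 2 ^ 2 := by
  rw [EuclideanSpace.norm_sq_eq, Fin.sum_univ_three]
  simp

lemma norm_rot3 (α : ℝ) (x : E3) : ‖rot3 α x‖ = ‖x‖ := by
  have : ‖rot3 α x‖ ^ 2 = ‖x‖ ^ 2 := by
    rw [← VV_eta x, rot3_VV, normsq_E3, normsq_E3]
    simp only [VV_0, VV_1, VV_2]
    linear_combination (x 0 ^ 2 + x 1 ^ 2) * Real.sin_sq_add_cos_sq α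
  exact (sq_eq_sq₀ (norm_nonneg _) (norm_nonneg _)).1 this

lemma rot3_smul (α k : ℝ) (x : E3) : rot3 α (k • x) = k • rot3 α x := by
  rw [← VV_eta x, smul_VV, rot3_VV, rot3_VV, smul_VV]
  congr 1 <;> ring

lemma homExt_smul (ω : E3 → V5) {k : ℝ} (hk : 0 < k) (x : E3) :
    homExt ω (k • x) = homExt ω x := by
  unfold homExt
  rw [norm_smul, Real.norm_of_nonneg hk.le, smul_smul]
  congr 2
  rw [mul_inv]; field_simp

lemma homExt_rot {ω : E3 → V5} (heq : EquivariantS ω) (α : ℝ) {x : E3} (hx : x ≠ 0) :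
    homExt ω (rot3 α x) = circAct α (homExt ω x) := by
  unfold homExt
  rw [norm_rot3, ← rot3_smul]
  apply heq
  unfold sphere2
  rw [mem_sphere_zero_iff_norm, norm_smul, norm_inv, norm_norm, inv_mul_cancel₀ (norm_ne_zero_iff.2 hx)]

def GG (p : V5) : V5 := (0, Complex.I * p.2.1, 2 * Complex.I * p.2.2)

lemma hd_circAct (p : V5) (α : ℝ) : HasDerivAt (fun α => circAct α p) (GG (circAct α p)) α := by
  unfold circAct GG
  have h1 : ∀ k : ℂ, HasDerivAt (fun α : ℝ => Complex.exp (k * (α : ℂ)))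
      (Complex.exp (k * (α : ℂ)) * k) α := by
    intro k
    have := ((hasDerivAt_id (α : ℂ)).const_mul k).cexp.comp_ofReal
    simpa using this
  refine (hasDerivAt_const α p.1).prodMk ((((h1 Complex.I).mul_const p.2.1).prodMk
    ((h1 (2 * Complex.I)).mul_const p.2.2)).congr_deriv ?_)
  simp only
  congr 1 <;> ring

lemma hd_GG {f : ℝ → V5} {f' : V5} {u : ℝ} (h : HasDerivAt f f' u) :
    HasDerivAt (fun u => GG (f u)) (GG f') u := by
  have h2 : HasDerivAt (fun u => (f u).2) f'.2 u :=
    ((ContinuousLinearMap.snd ℝ ℝ (ℂ × ℂ)).hasFDerivAt.comp_hasDerivAt u h)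
  have h3 : HasDerivAt (fun u => (f u).2.1) f'.2.1 u :=
    ((ContinuousLinearMap.fst ℝ ℂ ℂ).hasFDerivAt.comp_hasDerivAt u h2)
  have h4 : HasDerivAt (fun u => (f u).2.2) f'.2.2 u :=
    ((ContinuousLinearMap.snd ℝ ℂ ℂ).hasFDerivAt.comp_hasDerivAt u h2)
  exact (hasDerivAt_const u 0).prodMk ((h3.const_mul _).prodMk (h4.const_mul _))

lemma circAct_zero (p : V5) : circAct 0 p = p := by simp [circAct]

lemma nsq_smul (c : ℝ) (p : V5) : nsq (c • p) = c ^ 2 * nsq p := by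
  simp only [nsq, Prod.smul_fst, Prod.smul_snd, smul_eq_mul, Complex.real_smul, Complex.normSq_mul,
    Complex.normSq_ofReal]
  ring

section geom

variable {ω : E3 → V5}

lemma Q_cd (hH : IsHarmonicSphere ω) {x : E3} (hx : x ≠ 0) :
    ContDiffAt ℝ (⊤ : ℕ∞) (homExt ω) x :=
  hH.2.1.contDiffAt (isOpen_compl_singleton.mem_nhds hx)

lemma Q_fd (hH : IsHarmonicSphere ω) {x : E3} (hx : x ≠ 0) :
    HasFDerivAt (homExt ω) (fderiv ℝ (homExt ω) x) x :=
  ((Q_cd hH hx).differentiableAt (by simp)).hasFDerivAt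

lemma Q_fd2 (hH : IsHarmonicSphere ω) (v : E3) {x : E3} (hx : x ≠ 0) :
    HasFDerivAt (fun y => fderiv ℝ (homExt ω) y v)
      (fderiv ℝ (fun y => fderiv ℝ (homExt ω) y v) x) x := by
  have h : ContDiffAt ℝ 1 (fderiv ℝ (homExt ω)) x :=
    (Q_cd hH hx).fderiv_right (WithTop.coe_le_coe.2 le_top)
  exact ((h.differentiableAt (by simp)).clm_apply (differentiableAt_const v)).hasFDerivAt

lemma hd_VV {a b c : ℝ → ℝ} {a' b' c' u : ℝ} (ha : HasDerivAt a a' u) (hb : HasDerivAt b b' u)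
    (hc : HasDerivAt c c' u) :
    HasDerivAt (fun u => VV (a u) (b u) (c u)) (VV a' b' c') u := by
  unfold VV
  exact ((ha.smul_const _).add (hb.smul_const _)).add (hc.smul_const _)

def hh (ω : E3 → V5) (s : ℝ) : V5 := homExt ω (VV 1 0 s)
def hh1 (ω : E3 → V5) (s : ℝ) : V5 := fderiv ℝ (homExt ω) (VV 1 0 s) (ee 2)
def hh2 (ω : E3 → V5) (s : ℝ) : V5 :=
  fderiv ℝ (fun y => fderiv ℝ (homExt ω) y (ee 2)) (VV 1 0 s) (ee 2)

lemma VV001 : VV 0 0 1 = ee 2 := by simp [VV]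
lemma VV010 : VV 0 1 0 = ee 1 := by simp [VV]
lemma VV100 : VV 1 0 0 = ee 0 := by simp [VV]

lemma hd_hh (hH : IsHarmonicSphere ω) (s : ℝ) : HasDerivAt (hh ω) (hh1 ω s) s := by
  have h := hd_VV (hasDerivAt_const s (1 : ℝ)) (hasDerivAt_const s (0 : ℝ)) (hasDerivAt_id s)
  have := (Q_fd hH (x := VV 1 0 s) (VV_ne0 (by simp))).comp_hasDerivAt s h
  rw [VV001] at this
  exact this

lemma hd_hh1 (hH : IsHarmonicSphere ω) (s : ℝ) : HasDerivAt (hh1 ω) (hh2 ω s) s := by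
  have h := hd_VV (hasDerivAt_const s (1 : ℝ)) (hasDerivAt_const s (0 : ℝ)) (hasDerivAt_id s)
  have := (Q_fd2 hH (ee 2) (x := VV 1 0 s) (VV_ne0 (by simp))).comp_hasDerivAt s h
  rw [VV001] at this
  exact this

lemma Q_line0 (ω : E3 → V5) {ρ : ℝ} (hρ : 0 < ρ) (s : ℝ) :
    homExt ω (VV ρ 0 s) = hh ω (s / ρ) := by
  unfold hh
  rw [← homExt_smul ω hρ (VV 1 0 (s / ρ)), smul_VV, mul_one, mul_zero, mul_div_cancel₀ _ hρ.ne']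

lemma d0 (hH : IsHarmonicSphere ω) {ρ : ℝ} (hρ : 0 < ρ) (s : ℝ) :
    fderiv ℝ (homExt ω) (VV ρ 0 s) (ee 0) = (-s / ρ ^ 2) • hh1 ω (s / ρ) := by
  have h := hd_VV (hasDerivAt_id ρ) (hasDerivAt_const ρ (0 : ℝ)) (hasDerivAt_const ρ s)
  have h1 := (Q_fd hH (x := VV ρ 0 s) (VV_ne0 (by simp [hρ.ne']))).comp_hasDerivAt ρ h
  rw [VV100] at h1
  have h2 : HasDerivAt (fun ρ => s / ρ) (-s / ρ ^ 2) ρ := by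
    have := (hasDerivAt_const ρ s).div (hasDerivAt_id ρ) hρ.ne'
    exact this.congr_deriv (by simp)
  have h3 := (hd_hh hH (s / ρ)).scomp ρ h2
  refine (h1.congr_of_eventuallyEq ?_).unique h3
  filter_upwards [lt_mem_nhds hρ] with r hr
  exact (Q_line0 ω hr s).symm

lemma d00 (hH : IsHarmonicSphere ω) (s : ℝ) :
    fderiv ℝ (fun y => fderiv ℝ (homExt ω) y (ee 0)) (VV 1 0 s) (ee 0) =
      (2 * s) • hh1 ω s + (s ^ 2) • hh2 ω s := by
  have h := hd_VV (hasDerivAt_id 1) (hasDerivAt_const 1 (0 : ℝ)) (hasDerivAt_const 1 s)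
  have h1 := (Q_fd2 hH (ee 0) (x := VV 1 0 s) (VV_ne0 (by simp))).comp_hasDerivAt (1 : ℝ) h
  rw [VV100] at h1
  have h2 : HasDerivAt (fun ρ => s / ρ) (-s) (1 : ℝ) := by
    have := (hasDerivAt_const 1 s).div (hasDerivAt_id (1 : ℝ)) one_ne_zero
    exact this.congr_deriv (by simp)
  have h2' : HasDerivAt (fun ρ => -s / ρ ^ 2) (2 * s) (1 : ℝ) := by
    have := (hasDerivAt_const 1 (-s)).div ((hasDerivAt_id (1 : ℝ)).pow 2) (by simp)
    simp at this
    exact this.congr_deriv (by ring)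
  have h3 : HasDerivAt (fun ρ => hh1 ω (s / ρ)) (-s • hh2 ω s) 1 := by
    have h5 := hd_hh1 hH (s / 1)
    have := h5.scomp (1 : ℝ) h2
    exact this.congr_deriv (by simp)
  have h4 := h2'.smul h3
  have h5 : HasDerivAt (fun ρ => (-s / ρ ^ 2) • hh1 ω (s / ρ)) _ 1 :=
    h1.congr_of_eventuallyEq (by
      filter_upwards [lt_mem_nhds (zero_lt_one' ℝ)] with r hr
      exact (d0 hH hr s).symm)
  have h6 := h5.unique h4
  refine h6.trans ?_
  simp [smul_smul]
  rw [add_comm, sq]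

lemma d1_id (hH : IsHarmonicSphere ω) (heq : EquivariantS ω) (s α : ℝ) :
    (-Real.sin α) • fderiv ℝ (homExt ω) (VV (Real.cos α) (Real.sin α) s) (ee 0) +
     (Real.cos α) • fderiv ℝ (homExt ω) (VV (Real.cos α) (Real.sin α) s) (ee 1) =
      GG (circAct α (hh ω s)) := by
  have h := hd_VV (Real.hasDerivAt_cos α) (Real.hasDerivAt_sin α) (hasDerivAt_const α s)
  have hne : VV (Real.cos α) (Real.sin α) s ≠ 0 := by
    apply VV_ne0
    by_contra hc
    push Not at hc
    have := Real.sin_sq_add_cos_sq α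
    rw [hc.1, hc.2.1] at this; norm_num at this
  have h1 := (Q_fd hH hne).comp_hasDerivAt α h
  have h2 := hd_circAct (hh ω s) α
  have e : (homExt ω ∘ fun u => VV (Real.cos u) (Real.sin u) s) =
      fun α => circAct α (hh ω s) := by
    ext1 β
    unfold hh
    rw [← homExt_rot heq β (VV_ne0 (by simp)), rot3_VV]
    simp
  rw [e] at h1
  rw [← h1.unique h2]
  unfold VV
  simp

lemma d1 (hH : IsHarmonicSphere ω) (heq : EquivariantS ω) (s : ℝ) :
    fderiv ℝ (homExt ω) (VV 1 0 s) (ee 1) = GG (hh ω s) := by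
  have := d1_id hH heq s 0
  simpa [circAct_zero] using this

lemma d11 (hH : IsHarmonicSphere ω) (heq : EquivariantS ω) (s : ℝ) :
    fderiv ℝ (fun y => fderiv ℝ (homExt ω) y (ee 1)) (VV 1 0 s) (ee 1) =
      GG (GG (hh ω s)) + (-s) • hh1 ω s := by
  have h := hd_VV (Real.hasDerivAt_cos 0) (Real.hasDerivAt_sin 0) (hasDerivAt_const 0 s)
  simp only [Real.sin_zero, Real.cos_zero, neg_zero, VV010] at h
  have hne : VV 1 0 s ≠ 0 := VV_ne0 (by simp)
  have g0 : HasDerivAt (fun α => fderiv ℝ (homExt ω) (VV (Real.cos α) (Real.sin α) s) (ee 0)) _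
    (0 : ℝ) := HasFDerivAt.comp_hasDerivAt (0 : ℝ)
      (l := fun y => fderiv ℝ (homExt ω) y (ee 0)) (by simpa using Q_fd2 hH (ee 0) hne) h
  have g1 : HasDerivAt (fun α => fderiv ℝ (homExt ω) (VV (Real.cos α) (Real.sin α) s) (ee 1)) _
    (0 : ℝ) := HasFDerivAt.comp_hasDerivAt (0 : ℝ)
      (l := fun y => fderiv ℝ (homExt ω) y (ee 1)) (by simpa using Q_fd2 hH (ee 1) hne) h
  have g2 := (((Real.hasDerivAt_sin 0).neg).smul g0).add ((Real.hasDerivAt_cos 0).smul g1)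
  have g3 := hd_GG (hd_circAct (hh ω s) 0)
  have e : (fun α => GG (circAct α (hh ω s))) =
    ((-Real.sin) • fun α => fderiv ℝ (homExt ω) (VV (Real.cos α) (Real.sin α) s) (ee 0)) +
     (Real.cos • fun α => fderiv ℝ (homExt ω) (VV (Real.cos α) (Real.sin α) s) (ee 1)) := by
    ext1 α
    exact (d1_id hH heq s α).symm
  rw [e] at g3
  have g4 := g2.unique g3
  simp only [Real.sin_zero, Real.cos_zero, neg_zero, zero_smul, one_smul, zero_add, add_zero,
    circAct_zero, neg_smul] at g4
  rw [← g4, d0 hH one_pos s]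
  simp

end geom

section ode

variable {ω : E3 → V5}

def ff (ω : E3 → V5) (u : ℝ) : V5 := hh ω (-Real.sinh u)
def ff1 (ω : E3 → V5) (u : ℝ) : V5 := (-Real.cosh u) • hh1 ω (-Real.sinh u)

lemma hd_ff (hH : IsHarmonicSphere ω) (u : ℝ) : HasDerivAt (ff ω) (ff1 ω u) u :=
  (hd_hh hH (-Real.sinh u)).scomp u (Real.hasDerivAt_sinh u).neg

lemma harm_eq (hH : IsHarmonicSphere ω) (heq : EquivariantS ω) (s : ℝ) :
    (s ^ 2 + 1) • hh2 ω s + s • hh1 ω s + GG (GG (hh ω s)) +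
      ((s ^ 2 + 1) * nsq (hh1 ω s) + nsq (GG (hh ω s))) • hh ω s = 0 := by
  have h := hH.2.2 (VV 1 0 s) (VV_ne0 (by simp))
  have hl : lap (homExt ω) (VV 1 0 s) = (s ^ 2 + 1) • hh2 ω s + s • hh1 ω s + GG (GG (hh ω s)) := by
    unfold lap
    rw [Fin.sum_univ_three]
    have e0 := d00 hH s
    have e1 := d11 hH heq s
    have e2 : _ = hh2 ω s := rfl
    unfold hh2 at e2
    unfold ee at e0 e1 e2
    rw [e0, e1]
    change _ + _ + hh2 ω s = _
    module
  have hg : gradSq (homExt ω) (VV 1 0 s) =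
      (s ^ 2 + 1) * nsq (hh1 ω s) + nsq (GG (hh ω s)) := by
    unfold gradSq
    rw [Fin.sum_univ_three]
    have e0 := d0 hH one_pos s
    have e1 := d1 hH heq s
    unfold ee at e0 e1
    rw [e0, e1]
    change _ + _ + nsq (hh1 ω s) = _
    rw [nsq_smul]
    simp
    ring
  rw [hl, hg] at h
  exact h

lemma hd_ff1 (hH : IsHarmonicSphere ω) (heq : EquivariantS ω) (u : ℝ) :
    HasDerivAt (ff1 ω)
      (-(GG (GG (ff ω u))) - (nsq (ff1 ω u) + nsq (GG (ff ω u))) • ff ω u) u := by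
  have h1 := (Real.hasDerivAt_cosh u).neg.smul
    ((hd_hh1 hH (-Real.sinh u)).scomp u (Real.hasDerivAt_sinh u).neg)
  refine h1.congr_deriv ?_
  have h2 := harm_eq hH heq (-Real.sinh u)
  have h3 : (-Real.sinh u) ^ 2 + 1 = Real.cosh u ^ 2 := by rw [Real.cosh_sq]; ring
  rw [h3] at h2
  unfold ff1 ff
  rw [nsq_smul, neg_sq]
  simp only [smul_smul, Pi.neg_apply, Function.comp]
  rw [← sub_eq_zero, ← h2]
  module

lemma ff_north (ω : E3 → V5) (u : ℝ) :
    ff ω u = homExt ω (VV (2 * Real.exp u) 0 (1 - Real.exp u ^ 2)) := by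
  rw [Q_line0 ω (by positivity)]
  unfold ff
  congr 1
  rw [Real.sinh_eq, Real.exp_neg]
  have := Real.exp_pos u
  field_simp
  ring

lemma ff_south (ω : E3 → V5) (u : ℝ) :
    ff ω u = homExt ω (VV (2 * Real.exp (-u)) 0 (Real.exp (-u) ^ 2 - 1)) := by
  rw [Q_line0 ω (by positivity)]
  unfold ff
  congr 1
  rw [Real.sinh_eq, Real.exp_neg]
  have := Real.exp_pos u
  field_simp
  ring

lemma cont_VV {a b c : ℝ → ℝ} (ha : Continuous a) (hb : Continuous b) (hc : Continuous c) :
    Continuous (fun u => VV (a u) (b u) (c u)) := by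
  unfold VV; fun_prop

lemma Q_cont (hH : IsHarmonicSphere ω) {x : E3} (hx : x ≠ 0) : ContinuousAt (homExt ω) x :=
  (Q_cd hH hx).continuousAt

lemma ff_lim_bot (hH : IsHarmonicSphere ω) :
    Filter.Tendsto (ff ω) Filter.atBot (nhds (homExt ω (VV 0 0 1))) := by
  rw [funext (ff_north ω)]
  have h1 : Continuous (fun r : ℝ => VV (2 * r) 0 (1 - r ^ 2)) :=
    cont_VV (by fun_prop) (by fun_prop) (by fun_prop)
  have h2 := (h1.tendsto 0).comp Real.tendsto_exp_atBot
  have h3 := Q_cont hH (x := VV 0 0 1) (VV_ne0 (by simp))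
  have h4 : VV (2 * 0) 0 (1 - 0 ^ 2) = VV 0 0 1 := by norm_num
  rw [h4] at h2
  exact h3.tendsto.comp h2

lemma ff_lim_top (hH : IsHarmonicSphere ω) :
    Filter.Tendsto (ff ω) Filter.atTop (nhds (homExt ω (VV 0 0 (-1)))) := by
  rw [funext (ff_south ω)]
  have h1 : Continuous (fun r : ℝ => VV (2 * r) 0 (r ^ 2 - 1)) :=
    cont_VV (by fun_prop) (by fun_prop) (by fun_prop)
  have h2 := (h1.tendsto 0).comp (Real.tendsto_exp_atBot.comp Filter.tendsto_neg_atTop_atBot)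
  have h3 := Q_cont hH (x := VV 0 0 (-1)) (VV_ne0 (by simp))
  have h4 : VV (2 * 0) 0 (0 ^ 2 - 1) = VV 0 0 (-1) := by norm_num
  rw [h4] at h2
  exact h3.tendsto.comp h2

lemma ff1_eq (hH : IsHarmonicSphere ω) (u : ℝ) :
    ff1 ω u = Real.exp u • fderiv ℝ (homExt ω) (VV (2 * Real.exp u) 0 (1 - Real.exp u ^ 2))
      (VV 2 0 (-2 * Real.exp u)) := by
  have h1 : HasDerivAt (fun u => VV (2 * Real.exp u) 0 (1 - Real.exp u ^ 2))
      (Real.exp u • VV 2 0 (-2 * Real.exp u)) u := by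
    have := hd_VV ((Real.hasDerivAt_exp u).const_mul 2) (hasDerivAt_const u 0)
      (((Real.hasDerivAt_exp u).pow 2).const_sub 1)
    refine this.congr_deriv ?_
    rw [smul_VV]
    congr 1
    · ring
    · ring
    · norm_num; ring
  have h2 := (Q_fd hH (x := VV (2 * Real.exp u) 0 (1 - Real.exp u ^ 2))
    (VV_ne0 (by simp))).comp_hasDerivAt u h1
  rw [map_smul] at h2
  have h3 := hd_ff hH u
  have e : ff ω = homExt ω ∘ fun u => VV (2 * Real.exp u) 0 (1 - Real.exp u ^ 2) :=
    funext (ff_north ω)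
  rw [e] at h3
  exact h3.unique h2

lemma ff1_lim (hH : IsHarmonicSphere ω) :
    Filter.Tendsto (ff1 ω) Filter.atBot (nhds 0) := by
  rw [funext (ff1_eq hH)]
  have h1 : Continuous (fun r : ℝ => VV (2 * r) 0 (1 - r ^ 2)) :=
    cont_VV (by fun_prop) (by fun_prop) (by fun_prop)
  have h1' : Continuous (fun r : ℝ => VV 2 0 (-2 * r)) :=
    cont_VV (by fun_prop) (by fun_prop) (by fun_prop)
  have h2 := (h1.tendsto 0).comp Real.tendsto_exp_atBot
  have h2' := (h1'.tendsto 0).comp Real.tendsto_exp_atBot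
  have hne : VV 0 0 1 ≠ 0 := VV_ne0 (by simp)
  have h3 : ContinuousAt (fderiv ℝ (homExt ω)) (VV 0 0 1) :=
    ((Q_cd hH hne).fderiv_right (m := 1) (WithTop.coe_le_coe.2 le_top)).continuousAt
  have h4 : VV (2 * 0) 0 (1 - 0 ^ 2) = VV 0 0 1 := by norm_num
  rw [h4] at h2
  have h6 : Continuous (fun p : (E3 →L[ℝ] V5) × E3 => p.1 p.2) := isBoundedBilinearMap_apply.continuous
  have h7 := (h6.tendsto (fderiv ℝ (homExt ω) (VV 0 0 1), VV 2 0 (-2 * 0))).comp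
    ((h3.tendsto.comp h2).prodMk_nhds h2')
  have h5 := Real.tendsto_exp_atBot.smul h7
  rw [zero_smul] at h5
  exact h5

lemma fixed_pt {p : V5} (h : ∀ α, circAct α p = p) : p.2.1 = 0 ∧ p.2.2 = 0 := by
  constructor
  · have := congrArg (fun q : V5 => q.2.1) (h Real.pi)
    simp only [circAct] at this
    rw [mul_comm Complex.I, Complex.exp_pi_mul_I] at this
    linear_combination (-1 / 2) * this
  · have := congrArg (fun q : V5 => q.2.2) (h (Real.pi / 2))
    simp only [circAct] at this
    have e : 2 * Complex.I * ((Real.pi / 2 : ℝ) : ℂ) = Real.pi * Complex.I := by push_cast; ring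
    rw [e, Complex.exp_pi_mul_I] at this
    linear_combination (-1 / 2) * this

lemma pole_val (heq : EquivariantS ω) {s : ℝ} (hs : s ≠ 0) :
    (homExt ω (VV 0 0 s)).2.1 = 0 ∧ (homExt ω (VV 0 0 s)).2.2 = 0 := by
  apply fixed_pt
  intro α
  rw [← homExt_rot heq α (VV_ne0 (by simp [hs])), rot3_VV]
  simp

lemma homExt_sphere (ω : E3 → V5) {x : E3} (hx : x ∈ sphere2) : homExt ω x = ω x := by
  have : ‖x‖ = 1 := by simpa [sphere2] using hx
  unfold homExt
  rw [this]; simp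

lemma nsq_homExt (hH : IsHarmonicSphere ω) {x : E3} (hx : x ≠ 0) : nsq (homExt ω x) = 1 := by
  apply hH.1
  unfold sphere2
  rw [mem_sphere_zero_iff_norm, norm_smul, norm_inv, norm_norm,
    inv_mul_cancel₀ (norm_ne_zero_iff.2 hx)]

/-- polar form of a point of the sphere -/
lemma polar (heq : EquivariantS ω) {x : E3} (hx : x ∈ sphere2) :
    x = VV 0 0 1 ∨ x = VV 0 0 (-1) ∨ ∃ r α : ℝ, 0 < r ∧ 0 < 1 + x 2 ∧
      (x 0 : ℂ) + (x 1 : ℂ) * Complex.I =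
        ((1 + x 2 : ℝ) : ℂ) * (r : ℂ) * Complex.exp (Complex.I * (α : ℂ)) ∧
      ω x = circAct α (ff ω (Real.log r)) := by
  have hn : ‖x‖ = 1 := by simpa [sphere2] using hx
  have hs : x 0 ^ 2 + x 1 ^ 2 + x 2 ^ 2 = 1 := by rw [← normsq_E3, hn]; norm_num
  set z : ℂ := (x 0 : ℂ) + (x 1 : ℂ) * Complex.I with hz
  have zre : z.re = x 0 := by simp [hz]
  have zim : z.im = x 1 := by simp [hz]
  by_cases hz0 : z = 0
  · have e0 : x 0 = 0 := by rw [← zre, hz0]; simp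
    have e1 : x 1 = 0 := by rw [← zim, hz0]; simp
    rw [e0, e1] at hs
    have h2 : x 2 ^ 2 = 1 := by linarith
    rcases sq_eq_one_iff.1 h2 with h | h
    · left; rw [← VV_eta x, e0, e1, h]
    · right; left; rw [← VV_eta x, e0, e1, h]
  · right; right
    have hρ : 0 < ‖z‖ := norm_pos_iff.2 hz0
    have hρ2 : ‖z‖ ^ 2 = x 0 ^ 2 + x 1 ^ 2 := by
      rw [Complex.sq_norm, Complex.normSq_apply, zre, zim]; ring
    have hk : 0 < 1 + x 2 := by nlinarith [sq_nonneg (x 2 + 1), sq_pos_of_pos hρ]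
    have hr : 0 < ‖z‖ / (1 + x 2) := div_pos hρ hk
    refine ⟨‖z‖ / (1 + x 2), Complex.arg z, hr, hk, ?_, ?_⟩
    · have h1 := Complex.norm_mul_exp_arg_mul_I z
      rw [← Complex.ofReal_mul, mul_div_cancel₀ _ hk.ne', mul_comm Complex.I, h1]
    · have hc : Real.cos (Complex.arg z) * ‖z‖ = x 0 := by
        rw [Complex.cos_arg hz0, zre]; field_simp
      have hsn : Real.sin (Complex.arg z) * ‖z‖ = x 1 := by
        rw [Complex.sin_arg, zim]; field_simp
      have hxr : x = rot3 (Complex.arg z) (VV ‖z‖ 0 (x 2)) := by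
        rw [rot3_VV, mul_zero, mul_zero, sub_zero, add_zero, hc, hsn, VV_eta]
      conv_lhs => rw [← homExt_sphere ω hx, hxr, homExt_rot heq _ (VV_ne0 (by simp [hz0]))]
      congr 1
      rw [ff_north, Real.exp_log hr, ← homExt_smul ω (k := (1 + x 2) / 2) (by positivity)
        (VV (2 * (‖z‖ / (1 + x 2))) 0 (1 - (‖z‖ / (1 + x 2)) ^ 2)), smul_VV]
      have e1 : (1 + x 2) / 2 * (2 * (‖z‖ / (1 + x 2))) = ‖z‖ := by field_simp
      have e2 : (1 + x 2) / 2 * (1 - (‖z‖ / (1 + x 2)) ^ 2) = x 2 := by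
        rw [div_pow, hρ2]
        field_simp
        linear_combination -hs
      rw [e1, e2, mul_zero]

end ode

lemma lift_eval (p0 q0 k r : ℝ) (c1 c2 w : ℂ) (hk : 0 < k) (hc1 : Complex.normSq c1 = 1)
    (hc2 : Complex.normSq c2 = 1) (hw : Complex.normSq w = 1) :
    liftCurve ((p0 : ℂ) * c1) ((q0 : ℂ) * c2) (k : ℂ) ((k : ℂ) * (r : ℂ) * w) =
      (XT (p0 * r) (q0 * r ^ 2), w * (((XA (p0 * r) (q0 * r ^ 2) : ℝ) : ℂ) * c1),
        w ^ 2 * (((XB (p0 * r) (q0 * r ^ 2) : ℝ) : ℂ) * c2)) := by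
  have hN := (NN_pos (p0 * r) (q0 * r ^ 2)).ne'
  have n0 : Complex.normSq ((k : ℂ) ^ 3) = k ^ 6 := by
    simp only [map_pow, Complex.normSq_ofReal]; ring
  have n1 : Complex.normSq ((p0 : ℂ) * c1 * (k : ℂ) ^ 2 * ((k : ℂ) * (r : ℂ) * w)) =
      k ^ 6 * (p0 * r) ^ 2 := by
    simp only [map_pow, map_mul, Complex.normSq_ofReal, hc1, hw]; ring
  have n2 : Complex.normSq ((q0 : ℂ) * c2 * (k : ℂ) * ((k : ℂ) * (r : ℂ) * w) ^ 2) =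
      k ^ 6 * (q0 * r ^ 2) ^ 2 := by
    simp only [map_pow, map_mul, Complex.normSq_ofReal, hc2, hw]; ring
  have n3 : Complex.normSq (-((p0 : ℂ) * c1 * ((q0 : ℂ) * c2) / 3) * ((k : ℂ) * (r : ℂ) * w) ^ 3) =
      k ^ 6 * ((p0 * r) ^ 2 * (q0 * r ^ 2) ^ 2 / 9) := by
    simp only [map_pow, map_mul, Complex.normSq_neg, map_div₀, Complex.normSq_ofReal, hc1, hc2, hw]
    have : Complex.normSq 3 = 9 := by
      rw [show (3 : ℂ) = ((3 : ℝ) : ℂ) by norm_num, Complex.normSq_ofReal]; norm_num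
    rw [this]; ring
  have hs : k ^ 6 + k ^ 6 * (p0 * r) ^ 2 + k ^ 6 * (q0 * r ^ 2) ^ 2 +
      k ^ 6 * ((p0 * r) ^ 2 * (q0 * r ^ 2) ^ 2 / 9) = k ^ 6 * NN (p0 * r) (q0 * r ^ 2) := by
    unfold NN; ring
  have cc1 : (starRingEnd ℂ) c1 * c1 = 1 := by rw [← Complex.normSq_eq_conj_mul_self, hc1]; simp
  have cc2 : (starRingEnd ℂ) c2 * c2 = 1 := by rw [← Complex.normSq_eq_conj_mul_self, hc2]; simp
  have cw : (starRingEnd ℂ) w * w = 1 := by rw [← Complex.normSq_eq_conj_mul_self, hw]; simp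
  have hkC : (k : ℂ) ≠ 0 := by exact_mod_cast hk.ne'
  have hNC : ((NN (p0 * r) (q0 * r ^ 2) : ℝ) : ℂ) ≠ 0 := by exact_mod_cast hN
  unfold liftCurve tau4
  rw [n0, n1, n2, n3, hs]
  refine Prod.ext ?_ (Prod.ext ?_ ?_)
  · simp only
    unfold XT
    field_simp
    ring
  · simp only [conj', XA, map_mul, map_pow, Complex.conj_ofReal]
    push_cast
    have e : (starRingEnd ℂ) c2 * c2 * ((starRingEnd ℂ) w * w) ^ 2 = 1 := by rw [cc2, cw]; norm_num
    rw [div_eq_iff (mul_ne_zero (pow_ne_zero _ hkC) hNC)]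
    clear hs n0 n1 n2 n3 hN
    generalize ((NN (p0 * r) (q0 * r ^ 2) : ℝ) : ℂ) = M at *
    field_simp
    generalize (starRingEnd ℂ) c2 = d2 at *
    generalize (starRingEnd ℂ) w = v at *
    first
      | linear_combination (-(p0 : ℂ) * q0 ^ 2 * r ^ 5 * k ^ 6 * w * c1 ) * e
      | linear_combination (-(q0 : ℂ) ^ 2 * r ^ 4) * e
      | linear_combination (-(p0 : ℂ) * q0 ^ 2 * r ^ 5 * w * c1 ) * e
      | linear_combination (-2 * (q0 : ℂ) ^ 2 * r ^ 4) * e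
  · simp only [conj', XB, map_mul, map_pow, Complex.conj_ofReal]
    push_cast
    have e : (starRingEnd ℂ) c1 * c1 * ((starRingEnd ℂ) w * w) = 1 := by rw [cc1, cw]; norm_num
    rw [div_eq_iff (mul_ne_zero (pow_ne_zero _ hkC) hNC)]
    clear hs n0 n1 n2 n3 hN
    generalize ((NN (p0 * r) (q0 * r ^ 2) : ℝ) : ℂ) = M at *
    field_simp
    generalize (starRingEnd ℂ) c1 = d1 at *
    generalize (starRingEnd ℂ) w = v at *
    first
      | linear_combination ((p0 : ℂ) ^ 2 * r ^ 2) * e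
      | linear_combination ((q0 : ℂ) * p0 ^ 2 * r ^ 4 * w ^ 2 * c2) * e
      | linear_combination (2 * (p0 : ℂ) ^ 2 * r ^ 2) * e

lemma XT_bot (p0 q0 : ℝ) : Filter.Tendsto
    (fun u => XT (p0 * Real.exp u) (q0 * Real.exp u ^ 2)) Filter.atBot (nhds 1) := by
  have h : Continuous (fun r : ℝ => XT (p0 * r) (q0 * r ^ 2)) := by
    unfold XT
    refine Continuous.div (by fun_prop) (by unfold NN; fun_prop) (fun r => (NN_pos _ _).ne')
  have := (h.tendsto 0).comp Real.tendsto_exp_atBot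
  have e : XT (p0 * 0) (q0 * 0 ^ 2) = 1 := by simp [XT, NN]
  rw [e] at this
  exact this

lemma XT_top {p0 q0 : ℝ} (hp : p0 ≠ 0) (hq : q0 ≠ 0) : Filter.Tendsto
    (fun u => XT (p0 * Real.exp u) (q0 * Real.exp u ^ 2)) Filter.atTop (nhds 1) := by
  have h : Continuous (fun r : ℝ => XT (-3 / p0 * r) (3 / q0 * r ^ 2)) := by
    unfold XT
    refine Continuous.div (by fun_prop) (by unfold NN; fun_prop) (fun r => (NN_pos _ _).ne')
  have := (h.tendsto 0).comp (Real.tendsto_exp_atBot.comp Filter.tendsto_neg_atTop_atBot)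
  have e : XT (-3 / p0 * 0) (3 / q0 * 0 ^ 2) = 1 := by simp [XT, NN]
  rw [e] at this
  refine this.congr fun u => ?_
  have hu := (Real.exp_pos u).ne'
  rw [← (X_inv (p0 * Real.exp u) (q0 * Real.exp u ^ 2) (mul_ne_zero hp hu)
    (mul_ne_zero hq (pow_ne_zero _ hu))).1]
  simp only [Function.comp, Real.exp_neg]
  congr 1 <;> field_simp

lemma full_ne {ω : E3 → V5} (heq : EquivariantS ω)
    (hfull : Submodule.span ℝ (ω '' sphere2) = ⊤) (φ : V5 →ₗ[ℝ] ℂ) (v : V5) (hv : φ v ≠ 0)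
    (hpole : ∀ s : ℝ, s ≠ 0 → φ (homExt ω (VV 0 0 s)) = 0)
    (hrot : ∀ α u, φ (ff ω u) = 0 → φ (circAct α (ff ω u)) = 0) :
    ¬ ∀ u, φ (ff ω u) = 0 := by
  intro h
  have hle : Submodule.span ℝ (ω '' sphere2) ≤ LinearMap.ker φ := by
    rw [Submodule.span_le]
    rintro _ ⟨x, hx, rfl⟩
    change φ (ω x) = 0
    rcases polar heq hx with e | e | ⟨r, α, -, -, -, e⟩
    · rw [← homExt_sphere ω hx, e]; exact hpole 1 (by norm_num)
    · rw [← homExt_sphere ω hx, e]; exact hpole (-1) (by norm_num)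
    · rw [e]; exact hrot _ _ (h _)
  rw [hfull] at hle
  exact hv (hle (Submodule.mem_top : v ∈ ⊤))

lemma south_eq : southPole = VV 0 0 (-1) :=
  E3_ext (by simp [southPole]) (by simp [southPole]) (by simp [southPole])

/-- Classification of linearly full equivariant harmonic spheres: every linearly full,
smooth, S¹-equivariant harmonic sphere ω : S² → S⁴ coincides, up to composition with
the antipodal map of S⁴, with a member ω_{μ₁,μ₂} (μ₁, μ₂ ∈ ℂ ∖ {0}) of the explicit
two-parameter family. -/
theorem statement11 (ω : E3 → V5)
    (hH : IsHarmonicSphere ω) (heq : EquivariantS ω)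
    (hfull : Submodule.span ℝ (ω '' sphere2) = ⊤) :
    ∃ μ1 μ2 : ℂ, μ1 ≠ 0 ∧ μ2 ≠ 0 ∧
      ((∀ x ∈ sphere2, ω x = omegaFam μ1 μ2 x) ∨
        (∀ x ∈ sphere2, ω x = -omegaFam μ1 μ2 x)) := by
  obtain ⟨e1, e2⟩ := And.intro (hd_ff hH) (hd_ff1 hH heq)
  have cfst : ∀ {f : ℝ → V5} {f' : V5} {u : ℝ}, HasDerivAt f f' u →
      HasDerivAt (fun u => (f u).1) f'.1 u := fun h =>
    ((ContinuousLinearMap.fst ℝ ℝ (ℂ × ℂ)).hasFDerivAt.comp_hasDerivAt _ h)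
  have csnd : ∀ {f : ℝ → V5} {f' : V5} {u : ℝ}, HasDerivAt f f' u →
      HasDerivAt (fun u => (f u).2) f'.2 u := fun h =>
    ((ContinuousLinearMap.snd ℝ ℝ (ℂ × ℂ)).hasFDerivAt.comp_hasDerivAt _ h)
  have c21 : ∀ {f : ℝ → V5} {f' : V5} {u : ℝ}, HasDerivAt f f' u →
      HasDerivAt (fun u => (f u).2.1) f'.2.1 u := fun h =>
    ((ContinuousLinearMap.fst ℝ ℂ ℂ).hasFDerivAt.comp_hasDerivAt _ (csnd h))
  have c22 : ∀ {f : ℝ → V5} {f' : V5} {u : ℝ}, HasDerivAt f f' u →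
      HasDerivAt (fun u => (f u).2.2) f'.2.2 u := fun h =>
    ((ContinuousLinearMap.snd ℝ ℂ ℂ).hasFDerivAt.comp_hasDerivAt _ (csnd h))
  have l21 : ∀ {f : ℝ → V5} {p : V5} {F : Filter ℝ}, Filter.Tendsto f F (nhds p) →
      Filter.Tendsto (fun u => (f u).2.1) F (nhds p.2.1) := fun h => h.snd_nhds.fst_nhds
  have l22 : ∀ {f : ℝ → V5} {p : V5} {F : Filter ℝ}, Filter.Tendsto f F (nhds p) →
      Filter.Tendsto (fun u => (f u).2.2) F (nhds p.2.2) := fun h => h.snd_nhds.snd_nhds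
  have pN := pole_val heq (s := 1) (by norm_num)
  have pS := pole_val heq (s := -1) (by norm_num)
  have lb := ff_lim_bot hH
  have lt := ff_lim_top hH
  have la := l21 lb
  have lbb := l22 lb
  rw [pN.1] at la
  rw [pN.2] at lbb
  have lf1 := ff1_lim hH
  obtain ⟨ε, p0, q0, c1, c2, hε, hp0, hq0, hc1, hc2, H⟩ := ode_complex
    (fun u => (ff ω u).1) (fun u => (ff1 ω u).1) (fun u => (ff ω u).2.1) (fun u => (ff1 ω u).2.1)
    (fun u => (ff ω u).2.2) (fun u => (ff1 ω u).2.2)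
    (fun u => nsq (ff1 ω u) + nsq (GG (ff ω u)))
    (fun u => cfst (e1 u)) (fun u => c21 (e1 u)) (fun u => c22 (e1 u))
    (fun u => (cfst (e2 u)).congr_deriv (by simp [GG]; ring))
    (fun u => (c21 (e2 u)).congr_deriv (by
      simp only [GG, Prod.snd_sub, Prod.fst_sub, Prod.snd_neg, Prod.fst_neg, Prod.smul_snd,
        Prod.smul_fst, Complex.real_smul]
      push_cast
      linear_combination (-(ff ω u).2.1) * Complex.I_mul_I))
    (fun u => (c22 (e2 u)).congr_deriv (by
      simp only [GG, Prod.snd_sub, Prod.snd_neg, Prod.smul_snd, Complex.real_smul]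
      push_cast
      linear_combination (-4 * (ff ω u).2.2) * Complex.I_mul_I))
    (fun u => nsq_homExt hH (VV_ne0 (by simp)))
    (fun u => by
      have : Complex.normSq 2 = 4 := by
        rw [show (2 : ℂ) = ((2 : ℝ) : ℂ) by norm_num, Complex.normSq_ofReal]; norm_num
      simp only [nsq, GG, Complex.normSq_mul, Complex.normSq_I, this]
      ring)
    la lbb lf1.fst_nhds (l21 lf1) (l22 lf1)
    (full_ne heq hfull ((LinearMap.fst ℝ ℂ ℂ).comp (LinearMap.snd ℝ ℝ (ℂ × ℂ))) (0, 1, 0)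
      (by simp) (fun s hs => (pole_val heq hs).1)
      (fun α u h => by simp at h; simp [circAct, h]))
    (full_ne heq hfull ((LinearMap.snd ℝ ℂ ℂ).comp (LinearMap.snd ℝ ℝ (ℂ × ℂ))) (0, 0, 1)
      (by simp) (fun s hs => (pole_val heq hs).2)
      (fun α u h => by simp at h; simp [circAct, h]))
  have hc1' : c1 ≠ 0 := by rintro rfl; simp at hc1
  have hc2' : c2 ≠ 0 := by rintro rfl; simp at hc2
  have hm1 : (p0 : ℂ) * c1 ≠ 0 := mul_ne_zero (by exact_mod_cast hp0) hc1'
  have hm2 : (q0 : ℂ) * c2 ≠ 0 := mul_ne_zero (by exact_mod_cast hq0) hc2'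
  have tN : (homExt ω (VV 0 0 1)).1 = ε := by
    have h1 := lb.fst_nhds
    rw [funext fun u => (H u).1] at h1
    have h2 := (XT_bot p0 q0).const_mul ε
    rw [mul_one] at h2
    exact tendsto_nhds_unique h1 h2
  have tS : (homExt ω (VV 0 0 (-1))).1 = ε := by
    have h1 := lt.fst_nhds
    rw [funext fun u => (H u).1] at h1
    have h2 := (XT_top hp0 hq0).const_mul ε
    rw [mul_one] at h2
    exact tendsto_nhds_unique h1 h2
  have main : ∀ x ∈ sphere2, ω x = ε • omegaFam ((p0 : ℂ) * c1) ((q0 : ℂ) * c2) x := by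
    intro x hx
    rcases polar heq hx with e | e | ⟨r, α, hr, hk, hz, e⟩
    · have hns : x ≠ southPole := by
        intro h
        rw [e, south_eq] at h
        have := congrArg (fun x : E3 => x 2) h
        norm_num at this
      have ho : omegaFam ((p0 : ℂ) * c1) ((q0 : ℂ) * c2) x = (1, 0, 0) := by
        unfold omegaFam
        rw [if_neg hns, e]
        simp only [VV_0, VV_1, VV_2]
        simp [liftCurve, tau4, conj']
      rw [← homExt_sphere ω hx, ho, e]
      refine Prod.ext ?_ (Prod.ext ?_ ?_)
      · simpa using tN
      · simpa using pN.1
      · simpa using pN.2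
    · have ho : omegaFam ((p0 : ℂ) * c1) ((q0 : ℂ) * c2) x = (1, 0, 0) := by
        unfold omegaFam
        rw [e, south_eq, if_pos rfl, if_neg (fun h => hm1 h.1), if_pos ⟨hm1, hm2⟩]
        have h3 : Complex.normSq (-((p0 : ℂ) * c1 * ((q0 : ℂ) * c2) / 3)) ≠ 0 := by
          rw [Ne, Complex.normSq_eq_zero, neg_eq_zero]
          exact div_ne_zero (mul_ne_zero hm1 hm2) (by norm_num)
        have h4 : liftCurve ((p0 : ℂ) * c1) ((q0 : ℂ) * c2) 0 1 =
            tau4 0 0 0 (-((p0 : ℂ) * c1 * ((q0 : ℂ) * c2) / 3)) := by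
          simp [liftCurve]
        rw [h4]
        unfold tau4 conj'
        refine Prod.ext ?_ (Prod.ext ?_ ?_)
        · simp only [map_zero, zero_add, sub_zero]
          exact div_self h3
        · simp
        · simp
      rw [← homExt_sphere ω hx, ho, e]
      refine Prod.ext ?_ (Prod.ext ?_ ?_)
      · simpa using tS
      · simpa using pS.1
      · simpa using pS.2
    · have hns : x ≠ southPole := by
        intro h
        rw [h, south_eq] at hk
        norm_num at hk
      have hw : Complex.normSq (Complex.exp (Complex.I * (α : ℂ))) = 1 := by
        rw [← Complex.sq_norm, mul_comm, Complex.norm_exp_ofReal_mul_I]; norm_num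
      unfold omegaFam
      rw [if_neg hns, hz, lift_eval p0 q0 (1 + x 2) r c1 c2 _ hk hc1 hc2 hw, e]
      obtain ⟨h1, h2, h3⟩ := H (Real.log r)
      rw [Real.exp_log hr] at h1 h2 h3
      unfold circAct
      rw [h1, h2, h3]
      have h4 : Complex.exp (2 * Complex.I * (α : ℂ)) = Complex.exp (Complex.I * (α : ℂ)) ^ 2 := by
        rw [← Complex.exp_nat_mul]; congr 1; push_cast; ring
      rw [h4]
      refine Prod.ext ?_ (Prod.ext ?_ ?_)
      · simp
      · simp only [Prod.smul_snd, Prod.smul_fst, Complex.real_smul]; push_cast; ring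
      · simp only [Prod.smul_snd, Complex.real_smul]; push_cast; ring
  refine ⟨(p0 : ℂ) * c1, (q0 : ℂ) * c2, hm1, hm2, ?_⟩
  rcases hε with h | h
  · left; intro x hx; rw [main x hx, h, one_smul]
  · right; intro x hx; rw [main x hx, h, neg_one_smul]
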